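/- Let z1, z2, z3 be the three complex roots of the cubic X³ − X − 1. Then the product over all ordered pairs (i,j) with i ≠ j of (X − zi/zj) equals X⁶ + 3X⁵ + 5X⁴ + 5X³ + 5X² + 3X + 1; this degree-6 polynomial is irreducible over ℚ; and the Galois group of the splitting field of X³ − X − 1 over ℚ has order 6 (it is the full symmetric group S3 on the three roots). -/

import Mathlib

open Polynomial

/-!
If `a + b + c = 0`, then `(X - a / b) * (X - b / a)` equals `X ^ 2 + X + 1 - (p / q) * c * X`,
where `p = ab + ac + bc` and `q = -abc`. Multiplying over `c` expresses `∏ (X - zᵢ / zⱼ)` through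
`p ^ 3 / q ^ 2` alone. Comparing the equations satisfied by the roots `a = w * b` and `b` of
`X ^ 3 + p * X + q` recovers `b` rationally from `w`, so `w` generates the splitting field. That
field contains the square root `(a - b) * (a - c) * (b - c)` of the discriminant; if the cubic is
irreducible and its discriminant is not a square, the degree is divisible by both `3` and `2`,
hence the Galois group is all of `S₃` and `w` has degree `6`. For `X ^ 3 - X - 1` the discriminant
is `-23`.
-/

section FieldDegree

variable {K L : Type*} [Field K] [Field L] [Algebra K L] {f : K[X]} {x : L}

theorem irreducible_of_finrank_adjoin_eq_natDegree (hf : f ≠ 0) (hx : aeval x f = 0)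
    (hdeg : Module.finrank K (IntermediateField.adjoin K {x}) = f.natDegree) :
    Irreducible f := by
  have hint : IsIntegral K x := IsAlgebraic.isIntegral ⟨f, hf, hx⟩
  rw [IntermediateField.adjoin.finrank hint] at hdeg
  exact (associated_of_dvd_of_natDegree_le (minpoly.dvd K x hx) hf hdeg.ge).irreducible
    (minpoly.irreducible hint)

theorem natDegree_dvd_finrank_of_aeval_eq_zero (hf : Irreducible f) (hx : aeval x f = 0) :
    f.natDegree ∣ Module.finrank K L := by
  have hint : IsIntegral K x := IsAlgebraic.isIntegral ⟨f, hf.ne_zero, hx⟩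
  rw [← natDegree_eq_of_degree_eq (degree_eq_degree_of_associated
    ((minpoly.irreducible hint).associated_of_dvd hf (minpoly.dvd K x hx)))]
  exact minpoly.degree_dvd hint

theorem two_dvd_finrank_of_sq_eq_algebraMap {d : K} (hd : ¬ IsSquare d)
    (hx : x ^ 2 = algebraMap K L d) : 2 ∣ Module.finrank K L := by
  have hirr : Irreducible (X ^ 2 - C d) :=
    X_pow_sub_C_irreducible_of_prime Nat.prime_two fun r hr ↦ hd ⟨r, by rw [← hr, sq]⟩
  simpa using natDegree_dvd_finrank_of_aeval_eq_zero hirr (x := x) (by simp [hx])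

end FieldDegree

section FullSetOfRoots

variable {K L ι : Type*} [Field K] [Field L] [Algebra K L] [Fintype ι] {f : K[X]} {z : ι → L}
  (hf : f ≠ 0) (hdeg : f.natDegree ≤ Fintype.card ι) (hinj : Function.Injective z)
  (hroot : ∀ i, aeval (z i) f = 0)

include hf hdeg hinj hroot

theorem aroots_eq_map_univ : f.aroots L = Finset.univ.val.map z :=
  roots_eq_of_natDegree_le_card_of_ne_zero (S := Finset.univ.map ⟨z, hinj⟩)
    (by simpa [eval_map_algebraMap] using hroot) (by simpa using hdeg) (map_ne_zero hf)

theorem rootSet_eq_range : f.rootSet L = Set.range z := by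
  ext y
  rw [mem_rootSet', ← mem_aroots', aroots_eq_map_univ hf hdeg hinj hroot]
  simp

theorem splits_map_of_injective_roots : (f.map (algebraMap K L)).Splits := by
  have hcard : (f.aroots L).card = Fintype.card ι := by
    simp [aroots_eq_map_univ hf hdeg hinj hroot]
  refine splits_iff_card_roots.2 ((card_roots' _).antisymm ?_)
  rwa [← aroots_def, hcard, natDegree_map]

theorem separable_of_injective_roots : f.Separable := by
  rw [← separable_map (algebraMap K L), ← nodup_roots_iff_of_splits (map_ne_zero hf)
    (splits_map_of_injective_roots hf hdeg hinj hroot), ← aroots_def,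
    aroots_eq_map_univ hf hdeg hinj hroot]
  exact Finset.univ.nodup.map hinj

theorem isSplittingField_adjoin_range :
    f.IsSplittingField K (IntermediateField.adjoin K (Set.range z)) := by
  rw [← rootSet_eq_range hf hdeg hinj hroot]
  exact IntermediateField.adjoin_rootSet_isSplittingField
    (splits_map_of_injective_roots hf hdeg hinj hroot)

theorem natCard_gal_adjoin_range :
    Nat.card Gal(IntermediateField.adjoin K (Set.range z)/K) =
      Module.finrank K (IntermediateField.adjoin K (Set.range z)) := by
  have hsplitting := isSplittingField_adjoin_range hf hdeg hinj hroot
  have := hsplitting.finiteDimensional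
  have := IsGalois.of_separable_splitting_field (E := IntermediateField.adjoin K (Set.range z))
    (separable_of_injective_roots hf hdeg hinj hroot)
  exact IsGalois.card_aut_eq_finrank K _

theorem nonempty_mulEquiv_perm_of_factorial_dvd_finrank
    (hdvd : (Fintype.card ι).factorial ∣
      Module.finrank K (IntermediateField.adjoin K (Set.range z))) :
    Nonempty (Gal(IntermediateField.adjoin K (Set.range z)/K) ≃* Equiv.Perm ι) := by
  have hsplitting := isSplittingField_adjoin_range hf hdeg hinj hroot
  have := hsplitting.finiteDimensional
  have : Fact (f.map (algebraMap K L)).Splits :=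
    ⟨splits_map_of_injective_roots hf hdeg hinj hroot⟩
  let e : ι ≃ f.rootSet L := (Equiv.ofInjective z hinj).trans
    (Equiv.setCongr (rootSet_eq_range hf hdeg hinj hroot).symm)
  let toGal : Gal(IntermediateField.adjoin K (Set.range z)/K) ≃* f.Gal :=
    (IsSplittingField.algEquiv _ f).autCongr
  have hcard : Nat.card (Equiv.Perm (f.rootSet L)) ≤ Nat.card f.Gal := by
    rw [← Nat.card_congr toGal.toEquiv, natCard_gal_adjoin_range hf hdeg hinj hroot,
      Nat.card_perm, ← Nat.card_congr e, Nat.card_eq_fintype_card]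
    exact Nat.le_of_dvd Module.finrank_pos hdvd
  have hbij := (Gal.galActionHom_injective f L).bijective_of_nat_card_le hcard
  exact ⟨(toGal.trans (MulEquiv.ofBijective _ hbij)).trans e.symm.permCongrHom⟩

end FullSetOfRoots

section Discriminant

variable {K L : Type*} [Field K] [Field L] [Algebra K L] {P : Cubic K} {z : Fin 3 → L}

theorem cubic_roots_eq (ha : P.a ≠ 0) (hinj : Function.Injective z)
    (hroot : ∀ i, aeval (z i) P.toPoly = 0) :
    (P.map (algebraMap K L)).roots = {z 0, z 1, z 2} := by
  rw [Cubic.map_roots, ← aroots_def, aroots_eq_map_univ (Cubic.ne_zero_of_a_ne_zero ha)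
    (by simp [Cubic.natDegree_of_a_ne_zero ha]) hinj hroot]
  rfl

theorem six_dvd_finrank_of_cubic_roots (ha : P.a ≠ 0) (hirr : Irreducible P.toPoly)
    (hdiscr : ¬ IsSquare P.discr) (hinj : Function.Injective z)
    (hroot : ∀ i, aeval (z i) P.toPoly = 0) : 6 ∣ Module.finrank K L := by
  have htwo : 2 ∣ Module.finrank K L := two_dvd_finrank_of_sq_eq_algebraMap hdiscr
    (Cubic.discr_eq_prod_three_roots ha (cubic_roots_eq ha hinj hroot)).symm
  have hthree : 3 ∣ Module.finrank K L :=
    Cubic.natDegree_of_a_ne_zero ha ▸ natDegree_dvd_finrank_of_aeval_eq_zero hirr (hroot 0)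
  lia

theorem nonempty_mulEquiv_perm_of_cubic_roots (ha : P.a ≠ 0) (hirr : Irreducible P.toPoly)
    (hdiscr : ¬ IsSquare P.discr) (hinj : Function.Injective z)
    (hroot : ∀ i, aeval (z i) P.toPoly = 0) :
    Nonempty (Gal(IntermediateField.adjoin K (Set.range z)/K) ≃* Equiv.Perm (Fin 3)) := by
  let z' (i : Fin 3) : IntermediateField.adjoin K (Set.range z) :=
    ⟨z i, IntermediateField.subset_adjoin K _ ⟨i, rfl⟩⟩
  have hinj' : Function.Injective z' := fun i j h ↦ hinj (congrArg Subtype.val h)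
  have hroot' (i : Fin 3) : aeval (z' i) P.toPoly = 0 :=
    Subtype.ext ((IntermediateField.aeval_coe _ (z' i) _).symm.trans (hroot i))
  exact nonempty_mulEquiv_perm_of_factorial_dvd_finrank hirr.ne_zero
    (Cubic.natDegree_of_a_ne_zero ha).le hinj hroot
    (six_dvd_finrank_of_cubic_roots ha hirr hdiscr hinj' hroot')

end Discriminant

section RootQuotients

/-- The monic sextic whose roots are the quotients of distinct roots of `X ^ 3 + p * X + q`, when
`lam = p ^ 3 / q ^ 2`. -/
noncomputable def rootQuotientSextic {R : Type*} [CommRing R] (lam : R) : R[X] :=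
  (X ^ 2 + X + 1) ^ 3 + C lam * X ^ 2 * (X + 1) ^ 2

theorem map_rootQuotientSextic {R S : Type*} [CommRing R] [CommRing S] (φ : R →+* S) (lam : R) :
    (rootQuotientSextic lam).map φ = rootQuotientSextic (φ lam) := by
  simp [rootQuotientSextic]

theorem rootQuotientSextic_neg_one {R : Type*} [CommRing R] :
    rootQuotientSextic (-1 : R) =
      X ^ 6 + 3 * X ^ 5 + 5 * X ^ 4 + 5 * X ^ 3 + 5 * X ^ 2 + 3 * X + 1 := by
  rw [rootQuotientSextic, C_neg, C_1]
  ring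

theorem natDegree_rootQuotientSextic {R : Type*} [CommRing R] [Nontrivial R] (lam : R) :
    (rootQuotientSextic lam).natDegree = 6 := by
  rw [rootQuotientSextic]
  compute_degree!

variable {F : Type*} [Field F] {a b c p q : F}

theorem X_sub_C_div_mul_X_sub_C_div (hsum : a + b + c = 0) (hp : a * b + a * c + b * c = p)
    (hq : a * b * c = -q) (hq0 : q ≠ 0) :
    (X - C (a / b)) * (X - C (b / a)) = X ^ 2 + X + 1 - C (p / q * c) * X := by
  have habc : a * b * c ≠ 0 := hq ▸ neg_ne_zero.2 hq0
  obtain ⟨⟨ha, hb⟩, hc⟩ : (a ≠ 0 ∧ b ≠ 0) ∧ c ≠ 0 := by simpa [mul_ne_zero_iff] using habc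
  have hprod : a / b * (b / a) = 1 := by field_simp
  have hadd : a / b + b / a = p / q * c - 1 := by
    obtain rfl : c = -(a + b) := by linear_combination hsum
    obtain rfl : q = a * b * (a + b) := by linear_combination hq
    subst hp
    have hab : a + b ≠ 0 := neg_ne_zero.1 hc
    field_simp
    ring
  calc (X - C (a / b)) * (X - C (b / a))
      = X ^ 2 - C (a / b + b / a) * X + C (a / b * (b / a)) := by
        rw [C_add, C_mul]
        ring
    _ = X ^ 2 + X + 1 - C (p / q * c) * X := by
        rw [hprod, hadd, C_sub, C_1]
        ring

theorem prod_offDiag_fin_three {M : Type*} [CommMonoid M] (g : Fin 3 × Fin 3 → M) :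
    ∏ ij ∈ Finset.univ.offDiag, g ij =
      g (0, 1) * g (1, 0) * (g (0, 2) * g (2, 0)) * (g (1, 2) * g (2, 1)) := by
  have hoffDiag : (Finset.univ.offDiag : Finset (Fin 3 × Fin 3)) =
      {(0, 1), (1, 0), (0, 2), (2, 0), (1, 2), (2, 1)} := by decide
  simp [hoffDiag, mul_assoc]

theorem prod_X_sub_C_div_eq_rootQuotientSextic {z : Fin 3 → F} (hsum : z 0 + z 1 + z 2 = 0)
    (hp : z 0 * z 1 + z 0 * z 2 + z 1 * z 2 = p) (hq : z 0 * z 1 * z 2 = -q) (hq0 : q ≠ 0) :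
    ∏ ij ∈ Finset.univ.offDiag, (X - C (z ij.1 / z ij.2)) = rootQuotientSextic (p ^ 3 / q ^ 2) := by
  rw [prod_offDiag_fin_three, X_sub_C_div_mul_X_sub_C_div hsum hp hq hq0,
    X_sub_C_div_mul_X_sub_C_div (c := z 1) (p := p) (q := q) (by linear_combination hsum)
      (by linear_combination hp) (by linear_combination hq) hq0,
    X_sub_C_div_mul_X_sub_C_div (c := z 0) (p := p) (q := q) (by linear_combination hsum)
      (by linear_combination hp) (by linear_combination hq) hq0, rootQuotientSextic]
  set Y : F[X] := X ^ 2 + X + 1 with hY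
  calc (Y - C (p / q * z 2) * X) * (Y - C (p / q * z 1) * X) * (Y - C (p / q * z 0) * X)
      = Y ^ 3 - C (p / q * (z 0 + z 1 + z 2)) * X * Y ^ 2
        + C ((p / q) ^ 2 * (z 0 * z 1 + z 0 * z 2 + z 1 * z 2)) * X ^ 2 * Y
        - C ((p / q) ^ 3 * (z 0 * z 1 * z 2)) * X ^ 3 := by
        simp only [C_mul, C_add, C_pow]
        ring
    _ = Y ^ 3 + C (p ^ 3 / q ^ 2) * X ^ 2 * (X + Y) := by
        have hY_coeff : (p / q) ^ 2 * p = p ^ 3 / q ^ 2 := by ring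
        have hX_coeff : (p / q) ^ 3 * -q = -(p ^ 3 / q ^ 2) := by field_simp
        rw [hsum, hp, hq, hY_coeff, hX_coeff, mul_zero, C_0, C_neg]
        ring
    _ = Y ^ 3 + C (p ^ 3 / q ^ 2) * X ^ 2 * (X + 1) ^ 2 := by
        rw [hY]
        ring

end RootQuotients

section Generation

variable {K L : Type*} [Field K] [Field L] [Algebra K L] {p q : K}

theorem depressed_cubic_vieta {z : Fin 3 → L} (hinj : Function.Injective z)
    (hroot : ∀ i, z i ^ 3 + algebraMap K L p * z i + algebraMap K L q = 0) :
    z 0 + z 1 + z 2 = 0 ∧ z 0 * z 1 + z 0 * z 2 + z 1 * z 2 = algebraMap K L p ∧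
      z 0 * z 1 * z 2 = -algebraMap K L q := by
  let P : Cubic K := ⟨1, 0, p, q⟩
  have ha : P.a ≠ 0 := one_ne_zero
  have hroots := cubic_roots_eq ha hinj fun i ↦ by simpa [P, Cubic.toPoly] using hroot i
  have hb := Cubic.b_eq_three_roots ha hroots
  have hc := Cubic.c_eq_three_roots ha hroots
  have hd := Cubic.d_eq_three_roots ha hroots
  simp only [P, map_zero, map_one, one_mul] at hb hc hd
  exact ⟨by linear_combination hb, hc.symm, by linear_combination hd⟩

theorem mem_adjoin_div_of_depressed_cubic_roots {x y : L} (hp : p ≠ 0)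
    (hx : x ^ 3 + algebraMap K L p * x + algebraMap K L q = 0)
    (hy : y ^ 3 + algebraMap K L p * y + algebraMap K L q = 0)
    (hx0 : x ≠ 0) (hy0 : y ≠ 0) (hne : x ≠ y) (hne_neg : x ≠ -y) :
    y ∈ IntermediateField.adjoin K {x / y} := by
  set w := x / y with hw
  have hxw : x = w * y := (div_mul_cancel₀ x hy0).symm
  have hden : algebraMap K L p * (w ^ 3 - w) ≠ 0 := by
    have hfactor : w ^ 3 - w = x * (x - y) * (x + y) / y ^ 3 := by
      rw [hw]
      field_simp
      ring
    rw [hfactor]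
    exact mul_ne_zero (by simpa using hp)
      (div_ne_zero (mul_ne_zero (mul_ne_zero hx0 (sub_ne_zero.2 hne))
        (mt eq_neg_of_add_eq_zero_left hne_neg)) (pow_ne_zero 3 hy0))
  have hyw : y = algebraMap K L q * (1 - w ^ 3) / (algebraMap K L p * (w ^ 3 - w)) := by
    rw [eq_div_iff hden]
    rw [hxw] at hx
    linear_combination w ^ 3 * hy - hx
  have hw_mem := IntermediateField.mem_adjoin_simple_self K w
  rw [hyw]
  exact div_mem
    (mul_mem (algebraMap_mem _ q) (sub_mem (one_mem _) (pow_mem hw_mem 3)))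
    (mul_mem (algebraMap_mem _ p) (sub_mem (pow_mem hw_mem 3) hw_mem))

theorem adjoin_div_eq_adjoin_range {z : Fin 3 → L} (hp : p ≠ 0) (hq : q ≠ 0)
    (hinj : Function.Injective z)
    (hroot : ∀ i, z i ^ 3 + algebraMap K L p * z i + algebraMap K L q = 0) :
    IntermediateField.adjoin K {z 0 / z 1} = IntermediateField.adjoin K (Set.range z) := by
  obtain ⟨hsum, -, -⟩ := depressed_cubic_vieta hinj hroot
  have hne0 (i : Fin 3) : z i ≠ 0 := fun h ↦ hq (by simpa [h] using hroot i)
  apply le_antisymm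
  · rw [IntermediateField.adjoin_simple_le_iff]
    exact div_mem (IntermediateField.subset_adjoin K _ ⟨0, rfl⟩)
      (IntermediateField.subset_adjoin K _ ⟨1, rfl⟩)
  · have hw := IntermediateField.mem_adjoin_simple_self K (z 0 / z 1)
    have hz1 : z 1 ∈ IntermediateField.adjoin K {z 0 / z 1} :=
      mem_adjoin_div_of_depressed_cubic_roots hp (hroot 0) (hroot 1) (hne0 0) (hne0 1)
        (hinj.ne (by decide)) fun h ↦ hne0 2 (by linear_combination hsum - h)
    have hz0 : z 0 ∈ IntermediateField.adjoin K {z 0 / z 1} := by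
      simpa [div_mul_cancel₀ _ (hne0 1)] using mul_mem hw hz1
    have hz2 : z 2 ∈ IntermediateField.adjoin K {z 0 / z 1} := by
      simpa [eq_neg_of_add_eq_zero_right hsum] using neg_mem (add_mem hz0 hz1)
    rw [IntermediateField.adjoin_le_iff, Set.range_subset_iff, Fin.forall_fin_succ,
      Fin.forall_fin_two]
    exact ⟨hz0, hz1, hz2⟩

theorem prod_X_sub_C_div_eq_map {z : Fin 3 → L} (hq : q ≠ 0) (hinj : Function.Injective z)
    (hroot : ∀ i, z i ^ 3 + algebraMap K L p * z i + algebraMap K L q = 0) :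
    ∏ ij ∈ Finset.univ.offDiag, (X - C (z ij.1 / z ij.2)) =
      (rootQuotientSextic (p ^ 3 / q ^ 2)).map (algebraMap K L) := by
  obtain ⟨hsum, hpair, hprod⟩ := depressed_cubic_vieta hinj hroot
  rw [prod_X_sub_C_div_eq_rootQuotientSextic hsum hpair hprod (by simpa using hq),
    map_rootQuotientSextic, map_div₀, map_pow, map_pow]

theorem irreducible_rootQuotientSextic {z : Fin 3 → L} (hp : p ≠ 0) (hq : q ≠ 0)
    (hinj : Function.Injective z)
    (hroot : ∀ i, z i ^ 3 + algebraMap K L p * z i + algebraMap K L q = 0)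
    (hfinrank : Module.finrank K (IntermediateField.adjoin K (Set.range z)) = 6) :
    Irreducible (rootQuotientSextic (p ^ 3 / q ^ 2)) := by
  have hdeg := natDegree_rootQuotientSextic (p ^ 3 / q ^ 2)
  have haeval : aeval (z 0 / z 1) (rootQuotientSextic (p ^ 3 / q ^ 2)) = 0 := by
    rw [← eval_map_algebraMap, ← prod_X_sub_C_div_eq_map hq hinj hroot, eval_prod]
    exact Finset.prod_eq_zero (i := (0, 1)) (by decide) (by simp)
  have hne : rootQuotientSextic (p ^ 3 / q ^ 2) ≠ 0 :=
    ne_zero_of_natDegree_gt (n := 5) (by simp [hdeg])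
  refine irreducible_of_finrank_adjoin_eq_natDegree hne haeval ?_
  rw [adjoin_div_eq_adjoin_range hp hq hinj hroot, hfinrank, hdeg]

end Generation

theorem quotients_of_roots_of_cubic_general {K L : Type*} [Field K] [Field L] [Algebra K L]
    {p q : K} (hp : p ≠ 0) (hirr : Irreducible (X ^ 3 + C p * X + C q))
    (hdiscr : ¬ IsSquare (-4 * p ^ 3 - 27 * q ^ 2)) (z : Fin 3 → L)
    (hroot : ∀ i, z i ^ 3 + algebraMap K L p * z i + algebraMap K L q = 0)
    (hinj : Function.Injective z) :
    ∏ ij ∈ Finset.univ.offDiag, (X - C (z ij.1 / z ij.2)) =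
      (rootQuotientSextic (p ^ 3 / q ^ 2)).map (algebraMap K L) ∧
    Irreducible (rootQuotientSextic (p ^ 3 / q ^ 2)) ∧
    Nat.card Gal(IntermediateField.adjoin K (Set.range z)/K) = 6 ∧
    Nonempty (Gal(IntermediateField.adjoin K (Set.range z)/K) ≃* Equiv.Perm (Fin 3)) := by
  let P : Cubic K := ⟨1, 0, p, q⟩
  have ha : P.a ≠ 0 := one_ne_zero
  have hP : P.toPoly = X ^ 3 + C p * X + C q := by simp [P, Cubic.toPoly]
  have hdeg : P.toPoly.natDegree = 3 := Cubic.natDegree_of_a_ne_zero ha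
  have hrootP (i : Fin 3) : aeval (z i) P.toPoly = 0 := by simpa [hP] using hroot i
  have hdiscrP : ¬ IsSquare P.discr := by simpa [P, Cubic.discr] using hdiscr
  rw [← hP] at hirr
  have hq : q ≠ 0 := fun hq ↦ by
    have hdeg_one : P.toPoly.natDegree = 1 := natDegree_eq_of_degree_eq_some
      (degree_eq_one_of_irreducible_of_root (x := 0) hirr (by simp [hP, hq]))
    lia
  obtain ⟨e⟩ := nonempty_mulEquiv_perm_of_cubic_roots ha hirr hdiscrP hinj hrootP
  have hcard : Nat.card Gal(IntermediateField.adjoin K (Set.range z)/K) = 6 := by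
    rw [Nat.card_congr e.toEquiv, Nat.card_perm, Nat.card_fin]
    rfl
  have hfinrank : Module.finrank K (IntermediateField.adjoin K (Set.range z)) = 6 := by
    rw [← natCard_gal_adjoin_range hirr.ne_zero (by simp [hdeg]) hinj hrootP, hcard]
  exact ⟨prod_X_sub_C_div_eq_map hq hinj hroot,
    irreducible_rootQuotientSextic hp hq hinj hroot hfinrank, hcard, ⟨e⟩⟩

/-- Let `z 0, z 1, z 2` be the three (distinct) complex roots of
`X³ − X − 1`.  Then `∏_{i ≠ j} (X − z i / z j) = X⁶ + 3X⁵ + 5X⁴ + 5X³ + 5X² + 3X + 1`;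
this degree-6 polynomial is irreducible over `ℚ`; and the Galois group of the splitting
field of `X³ − X − 1` over `ℚ` has order `6` (it is the full symmetric group `S3` on the
three roots). -/
theorem quotients_of_roots_of_cubic
    (z : Fin 3 → ℂ)
    (hroot : ∀ i, (z i) ^ 3 - z i - 1 = 0)
    (hinj : Function.Injective z) :
    (∏ ij ∈ Finset.univ.offDiag, (X - C (z ij.1 / z ij.2)) =
      (X ^ 6 + 3 * X ^ 5 + 5 * X ^ 4 + 5 * X ^ 3 + 5 * X ^ 2 + 3 * X + 1 : Polynomial ℂ)) ∧
    Irreducible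
      (X ^ 6 + 3 * X ^ 5 + 5 * X ^ 4 + 5 * X ^ 3 + 5 * X ^ 2 + 3 * X + 1 : Polynomial ℚ) ∧
    Nat.card ((IntermediateField.adjoin ℚ (Set.range z)) ≃ₐ[ℚ]
      (IntermediateField.adjoin ℚ (Set.range z))) = 6 ∧
    Nonempty (((IntermediateField.adjoin ℚ (Set.range z)) ≃ₐ[ℚ]
      (IntermediateField.adjoin ℚ (Set.range z))) ≃* Equiv.Perm (Fin 3)) := by
  have hirr : Irreducible (X ^ 3 + C (-1) * X + C (-1) : ℚ[X]) := by
    simpa [sub_eq_add_neg] using X_pow_sub_X_sub_one_irreducible_rat (n := 3) (by decide)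
  have hdiscr : ¬ IsSquare (-4 * (-1) ^ 3 - 27 * (-1) ^ 2 : ℚ) :=
    fun h ↦ absurd h.nonneg (by norm_num)
  have hparam : ((-1) ^ 3 / (-1) ^ 2 : ℚ) = -1 := by norm_num
  have hgeneral := quotients_of_roots_of_cubic_general (by norm_num) hirr hdiscr z
    (by simpa [sub_eq_add_neg] using hroot) hinj
  rwa [hparam, map_rootQuotientSextic, map_neg, map_one, rootQuotientSextic_neg_one,
    rootQuotientSextic_neg_one] at hgeneral
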